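/- Let G be a finite group and ξ a linear character of G. Then #{conjugacy classes C of G with C ≠ C⁻¹} + 2·n_ξ = #{irreducible characters χ of G with χ ≠ χ̄⊗ξ}, where n_ξ = #{real conjugacy classes C of G with ξ(C) = −1}. -/

import Mathlib

/-!
Both sides are governed by the trace of one operator on the space of class functions of `G`,
namely `(T f)(C) = f(C⁻¹) · ξ(C)` (`twistOp`).

In the basis of indicator functions of conjugacy classes, only real classes contribute to the
trace; on a real class `ξ(C) = ξ(C)⁻¹`, so `ξ(C) = ±1`, and the trace is
`#{C real} - 2 n_ξ` (`trace_twistOp_classes`). In the basis of irreducible characters, `T`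
permutes the basis by `χ ↦ χ̄ ⊗ ξ`, because `χ(g⁻¹)` is the conjugate of `χ(g)`; the trace is
therefore the number of `χ` with `χ = χ̄ ⊗ ξ` (`trace_twistOp_chars`). Equating the two and
taking complements gives the theorem, since there are as many irreducible characters as
conjugacy classes (`card_irr`).

That the irreducible characters form a basis (`Irr.basis`) is orthonormality together with
completeness (`eq_zero_of_orth`): if a class function `F` satisfies `∑ g, F g * χ g = 0` for all
irreducible `χ`, the central element `∑ g, F g · g` of `ℂ[G]` acts on each simple module by a
scalar of trace zero, hence by zero. It then lies in the Jacobson radical of `ℂ[G]`, which is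
zero by Maschke's theorem.
-/

open scoped BigOperators

/-- The inverse of a conjugacy class: the class of `g` is sent to the class of `g⁻¹`. -/
def ConjClasses.inv' {G : Type*} [Group G] : ConjClasses G → ConjClasses G :=
  Quotient.map (·⁻¹) (by
    intro a b h
    change IsConj a b at h
    change IsConj a⁻¹ b⁻¹
    rw [isConj_iff] at h ⊢
    obtain ⟨c, rfl⟩ := h
    exact ⟨c, by group⟩)

/-- The predicate that `χ : G → ℂ` is the character of an irreducible complex
finite-dimensional representation of `G`. -/
def IsIrredChar (G : Type) [Group G] (χ : G → ℂ) : Prop :=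
  ∃ V : FDRep ℂ G, CategoryTheory.Simple V ∧ χ = V.character

/-- `|G_{**}|`: the number of orbits of the involution `C ↦ C⁻¹` on the set of conjugacy
classes of `G` (each orbit being the set `{C, C⁻¹}`). -/
noncomputable def numStarStar (G : Type) [Group G] : ℕ :=
  Nat.card {S : Set (ConjClasses G) // ∃ C : ConjClasses G, S = {C, ConjClasses.inv' C}}

/-- `n_ξ`: the number of real conjugacy classes of `G` on which `ξ` takes the value `-1`. -/
noncomputable def numXi (G : Type) [Group G] (ξ : G →* ℂˣ) : ℕ :=
  Nat.card {C : ConjClasses G // ConjClasses.inv' C = C ∧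
    ∀ g : G, ConjClasses.mk g = C → (ξ g : ℂ) = -1}

open CategoryTheory

/-! ### Conjugates of characters -/

open scoped ComplexOrder in
/-- In a basis, `M = ∑ g, A(g)ᴴ A(g)` is positive definite and invariant, `A(h)ᴴ M A(h) = M`.
Hence `A(h)ᴴ` is similar to `A(h⁻¹)`, and the two have the same trace. -/
lemma conj_char {G : Type} [Group G] [Fintype G] (V : FDRep ℂ G) (h : G) :
    (starRingEnd ℂ) (V.character h) = V.character h⁻¹ := by
  classical
  let b := Module.finBasis ℂ V
  let A : G → Matrix _ _ ℂ := fun g => LinearMap.toMatrix b b (V.ρ g)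
  have hA1 : A 1 = 1 := by simp [A]
  have hA : ∀ g k, A (g * k) = A g * A k := fun g k => by
    simp only [A, map_mul]
    exact LinearMap.toMatrix_mul b _ _
  have htr : ∀ g, V.character g = (A g).trace := fun g =>
    LinearMap.trace_eq_matrix_trace ℂ b _
  let M := ∑ g, (A g).conjTranspose * A g
  have hM : M.PosDef := by
    have : M = 1 + ∑ g ∈ Finset.univ.erase 1, (A g).conjTranspose * A g := by
      simp only [M]
      rw [← Finset.add_sum_erase _ _ (Finset.mem_univ (1 : G))]
      simp [hA1]
    rw [this]
    exact Matrix.PosDef.one.add_posSemidef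
      (Matrix.posSemidef_sum _ fun g _ => Matrix.posSemidef_conjTranspose_mul_self _)
  have hinv : (A h).conjTranspose * M * A h = M := by
    simp only [M, Finset.mul_sum, Finset.sum_mul]
    refine Fintype.sum_equiv (Equiv.mulRight h) _ _ fun g => ?_
    simp [hA, Matrix.conjTranspose_mul, Matrix.mul_assoc]
  have hdet : IsUnit M.det := (Matrix.isUnit_iff_isUnit_det _).1 hM.isUnit
  have key : (A h).conjTranspose = M * A h⁻¹ * M⁻¹ := by
    have h1 : A h * A h⁻¹ = 1 := by rw [← hA, mul_inv_cancel, hA1]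
    have h2 : (A h).conjTranspose * M = M * A h⁻¹ := by
      calc _ = (A h).conjTranspose * M * (A h * A h⁻¹) := by rw [h1, mul_one]
        _ = _ := by rw [← mul_assoc, hinv]
    rw [← h2, mul_assoc, Matrix.mul_nonsing_inv _ hdet, mul_one]
  rw [htr, htr, starRingEnd_apply, ← Matrix.trace_conjTranspose, key, Matrix.trace_mul_comm,
    ← mul_assoc, Matrix.nonsing_inv_mul _ hdet, one_mul]

/-! ### Completeness of the irreducible characters -/

lemma simple_of_irred {G : Type} [Group G] [Fintype G] {W : Type} [AddCommGroup W] [Module ℂ W]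
    [FiniteDimensional ℂ W] (ρ : Representation ℂ G W) [ρ.IsIrreducible] : Simple (FDRep.of ρ) := by
  have := invertibleOfNonzero (NeZero.ne (Nat.card G : ℂ))
  rw [FDRep.simple_iff_char_is_norm_one]
  have := Representation.char_orthonormal ρ ρ
  rw [if_pos ⟨Representation.Equiv.refl _⟩, inv_mul_eq_one₀ (NeZero.ne _)] at this
  exact this.symm

open scoped MonoidAlgebra in
/-- Schur's lemma: a central element `∑ g, F g · g` acts on a simple module `M` by a scalar `c`.
Its trace `c · dim M` is `∑ g, F g * χ_M g`, which vanishes by assumption, so `c = 0`. -/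
lemma smul_zero_of_central {G : Type} [Group G] [Fintype G] (F : G → ℂ) (a : ℂ[G])
    (ha : a = ∑ g, MonoidAlgebra.single g (F g))
    (hcomm : ∀ x : ℂ[G], a * x = x * a)
    (h0 : ∀ V : FDRep ℂ G, Simple V → ∑ g, F g * V.character g = 0)
    (M : Type) [AddCommGroup M] [Module ℂ M] [Module ℂ[G] M] [IsScalarTower ℂ ℂ[G] M]
    [hs : IsSimpleModule ℂ[G] M] (x : M) :
    a • x = 0 := by
  let ρ : Representation ℂ G M := Representation.ofModule' (k := ℂ) (G := G) M
  have hρ : ∀ (r : ℂ[G]) (y : M), ρ.asAlgebraHom r y = r • y := by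
    intro r y
    simp [ρ, Representation.ofModule', Representation.asAlgebraHom]
  let e : ρ.asModule ≃ₗ[ℂ[G]] M :=
    { ρ.asModuleEquiv with
      map_smul' := fun r y => (ρ.asModuleEquiv_map_smul r y).trans (hρ r _) }
  have hirr : ρ.IsIrreducible :=
    ρ.irreducible_iff_isSimpleModule_asModule.2 (IsSimpleModule.congr e)
  have hfd : FiniteDimensional ℂ M := Module.Finite.trans ℂ[G] _
  let f : Representation.IntertwiningMap ρ ρ := ⟨ρ.asAlgebraHom a, fun g => by
    have := congrArg ρ.asAlgebraHom (hcomm (MonoidAlgebra.single g 1))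
    simpa [Module.End.mul_eq_comp] using this⟩
  obtain ⟨c, hc⟩ := (Representation.IsIrreducible.algebraMap_intertwiningMap_bijective_of_isAlgClosed
    (ρ := ρ)).2 f
  have hc' : ρ.asAlgebraHom a = c • LinearMap.id := by
    ext v
    exact congrArg (fun f : Representation.IntertwiningMap ρ ρ => f v) hc.symm
  have htr : LinearMap.trace ℂ _ (ρ.asAlgebraHom a) = 0 := by
    rw [← h0 _ (simple_of_irred ρ), ha]
    simp only [map_sum, Representation.asAlgebraHom_single, map_smul, smul_eq_mul]
    rfl
  have hnt : Nontrivial M := IsSimpleModule.nontrivial ℂ[G] M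
  have hc0 : c = 0 := by
    rw [hc', map_smul, LinearMap.trace_id, smul_eq_mul, mul_eq_zero] at htr
    exact htr.resolve_right (by exact_mod_cast Module.finrank_pos.ne')
  rw [← hρ, hc', hc0, zero_smul, LinearMap.zero_apply]

open scoped MonoidAlgebra in
/-- Completeness: a class function `F` with `∑ g, F g * χ g = 0` for all irreducible characters
`χ` is zero. -/
lemma eq_zero_of_orth {G : Type} [Group G] [Fintype G] (F : G → ℂ)
    (hF : ∀ g h : G, F (h * g * h⁻¹) = F g)
    (h0 : ∀ V : FDRep ℂ G, Simple V → ∑ g, F g * V.character g = 0) : F = 0 := by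
  classical
  let a : ℂ[G] := ∑ g, MonoidAlgebra.single g (F g)
  have hcomm : ∀ x : ℂ[G], a * x = x * a := by
    intro x
    induction x using MonoidAlgebra.induction_linear with
    | zero => simp
    | add x y hx hy => rw [mul_add, add_mul, hx, hy]
    | single h c =>
      simp only [a, Finset.sum_mul, Finset.mul_sum, MonoidAlgebra.single_mul_single]
      refine Fintype.sum_equiv (MulAut.conj h⁻¹).toEquiv _ _ fun g => ?_
      have := hF g h⁻¹
      simp only [inv_inv] at this
      simp [mul_comm c, ← this, mul_assoc]
  have ha : a ∈ Ring.jacobson ℂ[G] := by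
    refine (Submodule.mem_sInf).2 fun m hm => ?_
    have hs : IsSimpleModule ℂ[G] (ℂ[G] ⧸ m) := isSimpleModule_iff_isCoatom.2 hm
    have := smul_zero_of_central F a rfl hcomm h0 (ℂ[G] ⧸ m) (Submodule.Quotient.mk 1)
    rwa [← Submodule.Quotient.mk_smul, Submodule.Quotient.mk_eq_zero, smul_eq_mul, mul_one] at this
  rw [IsSemisimpleRing.jacobson_eq_bot, Submodule.mem_bot] at ha
  ext g
  have := congrArg (fun x : ℂ[G] => x.coeff g) ha
  simpa [a, Finsupp.finsetSum_apply, Finsupp.single_apply] using this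

/-! ### Basic properties of irreducible characters -/

/-- `g ↦ χ(g⁻¹) ξ(g)` is the character of the dual representation twisted by `ξ`; it has the same
norm as `χ`, so the twisted dual is irreducible. -/
lemma irred_twist {G : Type} [Group G] [Fintype G] (ξ : G →* ℂˣ) {χ : G → ℂ}
    (hχ : IsIrredChar G χ) : IsIrredChar G fun g => χ g⁻¹ * (ξ g : ℂ) := by
  obtain ⟨V, hV, rfl⟩ := hχ
  let ρ : Representation ℂ G (Module.Dual ℂ V) :=
    { toFun := fun g => (ξ g : ℂ) • (Representation.dual V.ρ) g
      map_one' := by rw [map_one, map_one, Units.val_one, one_smul]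
      map_mul' := fun g h => by
        simp only [map_mul, Units.val_mul, smul_mul_assoc, mul_smul_comm, smul_smul]
        rw [mul_comm (ξ g : ℂ)] }
  have hρ : ∀ g, (FDRep.of ρ).character g = V.character g⁻¹ * (ξ g : ℂ) := by
    intro g
    have h1 : (FDRep.of ρ).character g =
        LinearMap.trace ℂ _ ((ξ g : ℂ) • (Representation.dual V.ρ) g) := rfl
    have h2 : LinearMap.trace ℂ _ ((Representation.dual V.ρ) g) = V.character g⁻¹ :=
      FDRep.char_dual V g
    rw [h1, map_smul, h2, smul_eq_mul, mul_comm]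
  refine ⟨FDRep.of ρ, ?_, funext fun g => (hρ g).symm⟩
  rw [FDRep.simple_iff_char_is_norm_one] at hV ⊢
  rw [← hV]
  refine Finset.sum_congr rfl fun g _ => ?_
  rw [hρ, hρ, map_inv, inv_inv, Units.val_inv_eq_inv_val]
  field_simp

lemma IsIrredChar.conj_eq {G : Type} [Group G] [Fintype G] {χ : G → ℂ}
    (hχ : IsIrredChar G χ) (g : G) : (starRingEnd ℂ) (χ g) = χ g⁻¹ := by
  obtain ⟨V, hV, rfl⟩ := hχ
  exact conj_char V g

lemma IsIrredChar.eq_of_isConj {G : Type} [Group G] {χ : G → ℂ}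
    (hχ : IsIrredChar G χ) {g h : G} (hgh : IsConj g h) : χ g = χ h := by
  obtain ⟨V, hV, rfl⟩ := hχ
  obtain ⟨c, rfl⟩ := isConj_iff.1 hgh
  exact (V.char_conj g c).symm

lemma IsIrredChar.orthonormal {G : Type} [Group G] [Fintype G] {χ ψ : G → ℂ}
    (hχ : IsIrredChar G χ) (hψ : IsIrredChar G ψ) [Decidable (χ = ψ)] :
    (Nat.card G : ℂ)⁻¹ * ∑ g, χ g * ψ g⁻¹ = if χ = ψ then 1 else 0 := by
  have := invertibleOfNonzero (NeZero.ne (Nat.card G : ℂ))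
  obtain ⟨V, hV, rfl⟩ := hχ
  obtain ⟨W, hW, rfl⟩ := hψ
  by_cases h : V.character = W.character
  · have h1 := FDRep.char_orthonormal V V
    rw [if_pos ⟨Iso.refl V⟩] at h1
    rw [if_pos h, ← h, h1]
  · rw [FDRep.char_orthonormal V W, if_neg h, if_neg]
    rintro ⟨i⟩
    exact h (FDRep.char_iso i)

/-! ### The basis of irreducible characters -/

/-- The irreducible characters of `G`. -/
abbrev Irr (G : Type) [Group G] : Type := {χ : G → ℂ // IsIrredChar G χ}

/-- An irreducible character as a function on conjugacy classes. -/
noncomputable def Irr.toClassFun {G : Type} [Group G] (χ : Irr G) : ConjClasses G → ℂ :=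
  Quotient.lift χ.1 fun _ _ h => χ.2.eq_of_isConj h

@[simp] lemma Irr.toClassFun_mk {G : Type} [Group G] (χ : Irr G) (g : G) :
    χ.toClassFun (ConjClasses.mk g) = χ.1 g := rfl

/-- The linear functional `f ↦ |G|⁻¹ ∑ g, f(g) χ(g⁻¹)` on class functions, i.e. the scalar product
with `χ`. -/
noncomputable def Irr.pairing {G : Type} [Group G] [Fintype G] (χ : Irr G) :
    Module.Dual ℂ (ConjClasses G → ℂ) :=
  (Nat.card G : ℂ)⁻¹ • ∑ g : G, χ.1 g⁻¹ • LinearMap.proj (ConjClasses.mk g)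

lemma Irr.pairing_apply {G : Type} [Group G] [Fintype G] (χ : Irr G) (f : ConjClasses G → ℂ) :
    χ.pairing f = (Nat.card G : ℂ)⁻¹ * ∑ g : G, f (ConjClasses.mk g) * χ.1 g⁻¹ := by
  simp [Irr.pairing, mul_comm]

open scoped Classical in
lemma Irr.pairing_toClassFun {G : Type} [Group G] [Fintype G] (χ ψ : Irr G) :
    χ.pairing ψ.toClassFun = if ψ = χ then 1 else 0 := by
  rw [Irr.pairing_apply]
  simp only [Irr.toClassFun_mk, ψ.2.orthonormal χ.2, Subtype.ext_iff]

lemma Irr.linearIndependent (G : Type) [Group G] [Fintype G] :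
    LinearIndependent ℂ (Irr.toClassFun (G := G)) := by
  classical
  refine LinearIndependent.of_pairwise_dual_eq_zero_one _ Irr.pairing ?_ ?_
  · intro χ ψ h
    rw [Irr.pairing_toClassFun, if_neg h.symm]
  · intro χ
    rw [Irr.pairing_toClassFun, if_pos rfl]

instance Irr.finite (G : Type) [Group G] [Fintype G] : Finite (Irr G) :=
  (Irr.linearIndependent G).finite

lemma Irr.eq_zero_of_pairing {G : Type} [Group G] [Fintype G] (f : ConjClasses G → ℂ)
    (hf : ∀ χ : Irr G, χ.pairing f = 0) : f = 0 := by
  have h := eq_zero_of_orth (fun g : G => f (ConjClasses.mk g⁻¹)) (fun g h => by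
      congr 1
      rw [ConjClasses.mk_eq_mk_iff_isConj, isConj_iff]
      exact ⟨h⁻¹, by group⟩) (fun V hV => by
      have h1 := hf ⟨V.character, V, hV, rfl⟩
      rw [Irr.pairing_apply, mul_eq_zero] at h1
      rw [← h1.resolve_left (inv_ne_zero (NeZero.ne _))]
      exact Fintype.sum_equiv (Equiv.inv G) _ _ fun g => by simp)
  ext C
  obtain ⟨g, rfl⟩ := ConjClasses.mk_surjective C
  simpa using congrFun h g⁻¹

lemma Irr.span_eq_top (G : Type) [Group G] [Fintype G] :
    ⊤ ≤ Submodule.span ℂ (Set.range (Irr.toClassFun (G := G))) := by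
  classical
  have := Fintype.ofFinite (Irr G)
  intro f _
  have h : f - ∑ χ : Irr G, χ.pairing f • χ.toClassFun = 0 :=
    Irr.eq_zero_of_pairing _ fun χ => by simp [Irr.pairing_toClassFun]
  rw [sub_eq_zero.1 h]
  exact Submodule.sum_mem _ fun χ _ =>
    Submodule.smul_mem _ _ (Submodule.subset_span ⟨χ, rfl⟩)

/-- The irreducible characters as a basis of the space of class functions. -/
noncomputable def Irr.basis (G : Type) [Group G] [Fintype G] :
    Module.Basis (Irr G) ℂ (ConjClasses G → ℂ) :=
  Module.Basis.mk (Irr.linearIndependent G) (Irr.span_eq_top G)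

lemma Irr.basis_apply {G : Type} [Group G] [Fintype G] (χ : Irr G) :
    Irr.basis G χ = χ.toClassFun := by simp [Irr.basis]

/-! ### The twisting operator and its trace -/

/-- The value `ξ(C)` of a linear character on a conjugacy class. -/
noncomputable def linOnClass {G : Type} [Group G] (ξ : G →* ℂˣ) : ConjClasses G → ℂ :=
  Quotient.lift (fun g => (ξ g : ℂ)) fun g h hgh => by
    obtain ⟨c, rfl⟩ := isConj_iff.1 (show IsConj g h from hgh)
    simp [mul_comm]

@[simp] lemma linOnClass_mk {G : Type} [Group G] (ξ : G →* ℂˣ) (g : G) :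
    linOnClass ξ (ConjClasses.mk g) = (ξ g : ℂ) := rfl

lemma inv'_mk {G : Type} [Group G] (g : G) :
    ConjClasses.inv' (ConjClasses.mk g) = ConjClasses.mk g⁻¹ := rfl

/-- The operator `(T f)(C) = f(C⁻¹) · ξ(C)` on class functions; it sends an irreducible character
`χ` to `χ̄ ⊗ ξ`. -/
noncomputable def twistOp {G : Type} [Group G] (ξ : G →* ℂˣ) :
    (ConjClasses G → ℂ) →ₗ[ℂ] (ConjClasses G → ℂ) where
  toFun f C := f (ConjClasses.inv' C) * linOnClass ξ C
  map_add' f g := by ext C; simp [add_mul]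
  map_smul' c f := by ext C; simp [mul_assoc]

lemma linOnClass_real {G : Type} [Group G] (ξ : G →* ℂˣ) {C : ConjClasses G}
    (hC : ConjClasses.inv' C = C) : linOnClass ξ C = 1 ∨ linOnClass ξ C = -1 := by
  obtain ⟨g, rfl⟩ := ConjClasses.mk_surjective C
  have h := congrArg (linOnClass ξ) hC
  rw [inv'_mk, linOnClass_mk, linOnClass_mk, map_inv, Units.val_inv_eq_inv_val] at h
  rw [linOnClass_mk]
  refine mul_self_eq_one_iff.1 ?_
  nth_rw 1 [← h]
  exact inv_mul_cancel₀ (Units.ne_zero _)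

open scoped Classical in
lemma trace_twistOp_classes {G : Type} [Group G] [Fintype G] (ξ : G →* ℂˣ) :
    LinearMap.trace ℂ _ (twistOp ξ) =
      (Nat.card {C : ConjClasses G // ConjClasses.inv' C = C} : ℂ) - 2 * (numXi G ξ : ℂ) := by
  have hn : numXi G ξ = Nat.card {C : ConjClasses G //
      ConjClasses.inv' C = C ∧ linOnClass ξ C = -1} := by
    refine Nat.card_congr (Equiv.subtypeEquivRight fun C => and_congr_right fun _ => ?_)
    obtain ⟨g, rfl⟩ := ConjClasses.mk_surjective C
    refine ⟨fun h => h g rfl, fun h k hk => ?_⟩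
    rw [← h, ← hk, linOnClass_mk]
  rw [hn, LinearMap.trace_eq_matrix_trace ℂ (Pi.basisFun ℂ (ConjClasses G)), Matrix.trace]
  simp only [Nat.card_eq_fintype_card, Fintype.card_subtype, Finset.card_filter, Nat.cast_sum,
    Finset.mul_sum, ← Finset.sum_sub_distrib]
  refine Finset.sum_congr rfl fun C _ => ?_
  rw [Matrix.diag_apply, LinearMap.toMatrix_apply, Pi.basisFun_apply, Pi.basisFun_repr]
  simp only [twistOp, LinearMap.coe_mk, AddHom.coe_mk, Pi.single_apply]
  by_cases hC : ConjClasses.inv' C = C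
  · rcases linOnClass_real ξ hC with h | h
    · have : (1 : ℂ) ≠ -1 := by norm_num
      simp [hC, h, this]
    · simp [hC, h]; norm_num
  · simp [hC]

open scoped Classical in
lemma trace_twistOp_chars {G : Type} [Group G] [Fintype G] (ξ : G →* ℂˣ) :
    LinearMap.trace ℂ _ (twistOp ξ) =
      (Nat.card {χ : Irr G // ∀ g, χ.1 g = (starRingEnd ℂ) (χ.1 g) * (ξ g : ℂ)} : ℂ) := by
  have := Fintype.ofFinite (Irr G)
  let σ : Irr G → Irr G := fun χ => ⟨_, irred_twist ξ χ.2⟩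
  have hσ : ∀ χ : Irr G, twistOp ξ (Irr.basis G χ) = Irr.basis G (σ χ) := by
    intro χ
    ext C
    obtain ⟨g, rfl⟩ := ConjClasses.mk_surjective C
    simp [Irr.basis_apply, twistOp, inv'_mk, σ]
  have hfix : ∀ χ : Irr G,
      σ χ = χ ↔ ∀ g, χ.1 g = (starRingEnd ℂ) (χ.1 g) * (ξ g : ℂ) := by
    intro χ
    simp only [Subtype.ext_iff, funext_iff, χ.2.conj_eq, σ]
    exact forall_congr' fun g => eq_comm
  rw [LinearMap.trace_eq_matrix_trace ℂ (Irr.basis G), Matrix.trace]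
  simp only [Nat.card_eq_fintype_card, Fintype.card_subtype, Finset.card_filter, Nat.cast_sum,
    ← hfix]
  refine Finset.sum_congr rfl fun χ _ => ?_
  rw [Matrix.diag_apply, LinearMap.toMatrix_apply, hσ, Module.Basis.repr_self,
    Finsupp.single_apply]
  simp

lemma card_irr (G : Type) [Group G] [Fintype G] : Nat.card (Irr G) = Nat.card (ConjClasses G) := by
  classical
  rw [← Module.finrank_eq_nat_card_basis (Irr.basis G), Module.finrank_fintype_fun_eq_card,
    Nat.card_eq_fintype_card]

/-- For a finite group `G` and a linear character `ξ` of `G`,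
`#{conjugacy classes C : C ≠ C⁻¹} + 2·n_ξ = #{χ irreducible : χ ≠ χ̄⊗ξ}`. -/
theorem count_complex_classes_twisted (G : Type) [Group G] [Fintype G] (ξ : G →* ℂˣ) :
    Nat.card {C : ConjClasses G // ConjClasses.inv' C ≠ C} + 2 * numXi G ξ
      = Nat.card {χ : G → ℂ // IsIrredChar G χ ∧
          ¬ ∀ g : G, χ g = (starRingEnd ℂ) (χ g) * (ξ g : ℂ)} := by
  classical
  have htrace := (trace_twistOp_classes ξ).symm.trans (trace_twistOp_chars ξ)
  have h1 : Nat.card {C : ConjClasses G // ConjClasses.inv' C = C} +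
      Nat.card {C : ConjClasses G // ConjClasses.inv' C ≠ C} = Nat.card (ConjClasses G) := by
    rw [← Nat.card_sum]
    exact Nat.card_congr (Equiv.sumCompl _)
  have h2 : Nat.card {χ : Irr G // ∀ g, χ.1 g = (starRingEnd ℂ) (χ.1 g) * (ξ g : ℂ)} +
      Nat.card {χ : Irr G // ¬ ∀ g, χ.1 g = (starRingEnd ℂ) (χ.1 g) * (ξ g : ℂ)} =
      Nat.card (Irr G) := by
    rw [← Nat.card_sum]
    exact Nat.card_congr (Equiv.sumCompl _)
  have h3 : Nat.card {χ : Irr G // ¬ ∀ g, χ.1 g = (starRingEnd ℂ) (χ.1 g) * (ξ g : ℂ)} =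
      Nat.card {χ : G → ℂ // IsIrredChar G χ ∧
        ¬ ∀ g : G, χ g = (starRingEnd ℂ) (χ g) * (ξ g : ℂ)} := Nat.card_congr (Equiv.subtypeSubtypeEquivSubtypeInter (IsIrredChar G)
    fun χ => ¬ ∀ g, χ g = (starRingEnd ℂ) (χ g) * (ξ g : ℂ))
  have h4 := card_irr G
  rw [sub_eq_iff_eq_add] at htrace
  norm_cast at htrace
  omega
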